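/- (Random symbol-pair codes achieve the Gilbert–Varshamov bound) Let q be a prime power, τ ∈ (0,1), and ε ∈ (0,1) with R := 1 − κ_sp(τ) − ε > 0, and set L = ⌈4/ε⌉ − 1. For all sufficiently large n the following holds: if M = ⌈q^{Rn}⌉ codewords c_1, …, c_M are chosen independently and uniformly at random from F_q^n, then with probability at least 1 − q^{−n} the code C = {c_1,…,c_M} is (τn, L)_P-list decodable. -/

import Mathlib

open scoped Classical

/-- The symbol-pair distance between two vectors `x, y : Fin n → F`. -/
def pairDist {F : Type*} [DecidableEq F] {n : ℕ} (x y : Fin n → F) : ℕ :=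
  (Finset.univ.filter fun i : Fin n =>
    (x i, x ⟨(i.1 + 1) % n, Nat.mod_lt _ i.pos⟩) ≠
    (y i, y ⟨(i.1 + 1) % n, Nat.mod_lt _ i.pos⟩)).card

/-- A code `C ⊆ F_q^n` is `(r, L)_P`-list decodable if every symbol-pair ball of
radius `r` contains at most `L` codewords of `C`. -/
noncomputable def pairListDecodable {F : Type*} [Fintype F] [DecidableEq F] {n : ℕ}
    (C : Finset (Fin n → F)) (r : ℝ) (L : ℕ) : Prop :=
  ∀ y : Fin n → F, (C.filter fun c => (pairDist y c : ℝ) ≤ r).card ≤ L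

/-- The `q`-ary entropy function `H_q(x)` (with `H_q(0) = 0`, since `logb q 0 = 0`). -/
noncomputable def qEntropy (q : ℕ) (x : ℝ) : ℝ :=
  x * Real.logb q (q - 1) - x * Real.logb q x - (1 - x) * Real.logb q (1 - x)

/-- `κ_sp(τ) = max_{0 ≤ θ/2 ≤ β ≤ θ ≤ τ} [β H_q((2β−θ)/β) + (1−β) H_q((θ−β)/(1−β))]`. -/
noncomputable def kappaSP (q : ℕ) (δ : ℝ) : ℝ :=
  sSup {y : ℝ | ∃ β θ : ℝ, 0 ≤ θ / 2 ∧ θ / 2 ≤ β ∧ β ≤ θ ∧ θ ≤ δ ∧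
    y = β * qEntropy q ((2 * β - θ) / β) + (1 - β) * qEntropy q ((θ - β) / (1 - β))}

/-!
Words at pair distance at most `τ n` from `y` are sorted by type: the number `w` of mismatches with
`y` and the number `b` of maximal cyclic runs of mismatches, so that the pair distance is `w + b`.
A Markov chain that enters and leaves mismatches with the empirical frequencies of a type gives each
word of that type the likelihood `q ^ (-n κ)`, where `κ` is the expression maximised by `κ_sp` at
`β = w / n` and `θ = (w + b) / n`. The likelihoods add up to at most `q`, so a pair ball has at most
`(n + 1)² q ^ (1 + κ_sp n)` elements. A union bound over the centres and over the `L + 1` positions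
of the codewords that fall into the same ball then controls the probability of failure.
-/

section MarkovChain

open Finset

variable {α : Type*} [Fintype α]

lemma sum_prod_path_eq_card {m : ℕ} {P : Fin m → α → α → ℝ} (hP : ∀ i a, ∑ c, P i a c = 1) :
    ∑ x : Fin (m + 1) → α, ∏ i, P i (x i.castSucc) (x i.succ) = Fintype.card α := by
  induction m with
  | zero => simp
  | succ m ih =>
    rw [← ih fun i => hP i.castSucc, ← (Fin.snocEquiv fun _ : Fin (m + 2) => α).sum_comp,
      Fintype.sum_prod_type_right]
    refine sum_congr rfl fun x _ => ?_
    simp only [Fin.snocEquiv, Equiv.coe_fn_mk, Fin.prod_univ_castSucc, Fin.succ_castSucc,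
      Fin.snoc_castSucc, Fin.succ_last, Fin.snoc_last]
    rw [← mul_sum, hP, mul_one]

lemma sum_prod_cycle_le_card [Nonempty α] {n : ℕ} {P : Fin n → α → α → ℝ}
    (hP : ∀ i a, ∑ c, P i a c = 1) (hP0 : ∀ i a c, 0 ≤ P i a c) :
    ∑ x : Fin n → α, ∏ i, P i (x i) (x (finRotate n i)) ≤ Fintype.card α := by
  cases n with
  | zero => simpa using Nat.one_le_iff_ne_zero.2 (Fintype.card_ne_zero (α := α))
  | succ m =>
    have hP1 (i a c) : P i a c ≤ 1 :=
      hP i a ▸ single_le_sum (fun c _ => hP0 i a c) (mem_univ c)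
    rw [← sum_prod_path_eq_card fun i : Fin m => hP i.castSucc]
    refine sum_le_sum fun x _ => ?_
    simp only [finRotate_apply, Fin.prod_univ_castSucc, Fin.coeSucc_eq_succ]
    exact mul_le_of_le_one_right (prod_nonneg fun _ _ => hP0 _ _ _) (hP1 _ _ _)

end MarkovChain

section Entropy

variable {q : ℕ}

lemma qEntropy_eq_qaryEntropy_div_log (x : ℝ) :
    qEntropy q x = Real.qaryEntropy q x / Real.log q := by
  simp only [qEntropy, Real.qaryEntropy, Real.binEntropy_eq_negMulLog_add_negMulLog_one_sub,
    Real.negMulLog, Real.logb]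
  push_cast
  ring

lemma qEntropy_le_two (hq : 2 ≤ q) {x : ℝ} (hx : x ≤ 1) : qEntropy q x ≤ 2 := by
  have hq' : (2 : ℝ) ≤ q := by exact_mod_cast hq
  have hlog_two : Real.log 2 ≤ Real.log q := Real.log_le_log two_pos hq'
  have hlog_sub_one : Real.log (q - 1) ≤ Real.log q :=
    Real.log_le_log (by linarith) (by linarith)
  have hmul : x * Real.log (q - 1) ≤ Real.log (q - 1) :=
    mul_le_of_le_one_left (Real.log_nonneg (by linarith)) hx
  rw [qEntropy_eq_qaryEntropy_div_log, div_le_iff₀ (Real.log_pos (by linarith)),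
    Real.qaryEntropy]
  push_cast
  linarith [Real.binEntropy_le_log_two (p := x)]

lemma le_kappaSP (hq : 2 ≤ q) {τ β θ : ℝ} (hτ : τ ≤ 1) (hθβ : θ / 2 ≤ β) (hβθ : β ≤ θ)
    (hθτ : θ ≤ τ) :
    β * qEntropy q ((2 * β - θ) / β) + (1 - β) * qEntropy q ((θ - β) / (1 - β)) ≤
      kappaSP q τ := by
  refine le_csSup ⟨2, ?_⟩ ⟨β, θ, by linarith, hθβ, hβθ, hθτ, rfl⟩
  rintro _ ⟨β, θ, hθ, hθβ, hβθ, hθτ, rfl⟩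
  have hβ0 : 0 ≤ β := by linarith
  have hβ1 : 0 ≤ 1 - β := by linarith
  have hmismatch : qEntropy q ((2 * β - θ) / β) ≤ 2 :=
    qEntropy_le_two hq (div_le_one_of_le₀ (by linarith) hβ0)
  have hmatch : qEntropy q ((θ - β) / (1 - β)) ≤ 2 :=
    qEntropy_le_two hq (div_le_one_of_le₀ (by linarith) hβ1)
  nlinarith

lemma mul_qEntropy_add_mul_qEntropy_le (hq : 2 ≤ q) {τ n w b : ℝ} (hτ : τ ≤ 1) (hn : 0 ≤ n)
    (hb : 0 ≤ b) (hbw : b ≤ w) (hwb : w + b ≤ τ * n) :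
    w * qEntropy q ((w - b) / w) + (n - w) * qEntropy q (b / (n - w)) ≤ kappaSP q τ * n := by
  rcases hn.eq_or_lt with rfl | hn
  · obtain rfl : w = 0 := by linarith
    simp
  have hkappa := le_kappaSP hq (β := w / n) (θ := (w + b) / n) hτ
    (by rw [div_right_comm]; gcongr; linarith) (by gcongr; linarith) ((div_le_iff₀ hn).2 hwb)
  have hmismatch : (2 * (w / n) - (w + b) / n) / (w / n) = (w - b) / w := by
    rw [← mul_div_assoc, ← sub_div, div_div_div_cancel_right₀ hn.ne']
    ring
  have hmatch : ((w + b) / n - w / n) / (1 - w / n) = b / (n - w) := by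
    rw [← sub_div, one_sub_div hn.ne', div_div_div_cancel_right₀ hn.ne', add_sub_cancel_left]
  rw [hmismatch, hmatch, ← mul_le_mul_iff_left₀ hn] at hkappa
  refine le_of_eq_of_le ?_ hkappa
  field_simp

lemma pow_eq_rpow_mul_logb {a x : ℝ} {k : ℕ} (ha : 0 < a) (ha1 : a ≠ 1) (hx : 0 ≤ x)
    (hk : x = 0 → k = 0) : x ^ k = a ^ (k * Real.logb a x) := by
  rcases hx.eq_or_lt with h0 | hpos
  · simp [hk h0.symm]
  · rw [mul_comm, Real.rpow_mul ha.le, Real.rpow_logb ha ha1 hpos, Real.rpow_natCast]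

lemma pow_mul_pow_eq_rpow_neg_mul_qEntropy (hq : 2 ≤ q) (j k : ℕ) :
    (1 - (k : ℝ) / (j + k)) ^ j * ((k : ℝ) / (j + k) / (q - 1)) ^ k =
      (q : ℝ) ^ (-((j + k) * qEntropy q (k / (j + k)))) := by
  have hq' : (2 : ℝ) ≤ q := by exact_mod_cast hq
  have hq0 : (0 : ℝ) < q := by linarith
  have hq1 : (q : ℝ) ≠ 1 := by linarith
  rcases Nat.eq_zero_or_pos (j + k) with hjk | hjk
  · obtain ⟨rfl, rfl⟩ : j = 0 ∧ k = 0 := by omega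
    simp
  have hjk' : (0 : ℝ) < j + k := by exact_mod_cast hjk
  have hsub : 1 - (k : ℝ) / (j + k) = j / (j + k) := by field_simp; ring
  have hzero (i : ℕ) : (i : ℝ) / (j + k) = 0 → i = 0 := by simp [hjk'.ne']
  rw [qEntropy, hsub, div_pow _ ((q : ℝ) - 1),
    pow_eq_rpow_mul_logb hq0 hq1 (by positivity) (hzero j),
    pow_eq_rpow_mul_logb hq0 hq1 (by positivity) (hzero k),
    pow_eq_rpow_mul_logb (x := (q : ℝ) - 1) hq0 hq1 (by linarith) (by intro h; linarith),
    ← Real.rpow_sub hq0, ← Real.rpow_add hq0]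
  congr 1
  field_simp
  ring

end Entropy

section SymmetricChannel

open Finset

variable {F : Type*} [Fintype F] [DecidableEq F]

/-- The `q`-ary symmetric channel with crossover probability `p`: the probability of receiving `c`
when `v` is sent, where each symbol `c ≠ v` has probability `p / (q - 1)`. -/
noncomputable def symmetricChannel (p : ℝ) (v c : F) : ℝ :=
  if v = c then 1 - p else p / (Fintype.card F - 1)

lemma symmetricChannel_nonneg [Nonempty F] {p : ℝ} (hp : p ∈ Set.Icc 0 1) (v c : F) :
    0 ≤ symmetricChannel p v c := by
  have hcard : (1 : ℝ) ≤ Fintype.card F := by exact_mod_cast Fintype.card_pos (α := F)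
  unfold symmetricChannel
  split_ifs
  · exact sub_nonneg.2 hp.2
  · exact div_nonneg hp.1 (sub_nonneg.2 hcard)

lemma sum_symmetricChannel [Nontrivial F] (p : ℝ) (v : F) :
    ∑ c, symmetricChannel p v c = 1 := by
  have hcard : (1 : ℝ) < Fintype.card F := by exact_mod_cast Fintype.one_lt_card (α := F)
  have hcard_ne : #{c | v ≠ c} = Fintype.card F - 1 := by
    rw [filter_ne, card_erase_of_mem (mem_univ v), card_univ]
  simp only [symmetricChannel, sum_ite, filter_eq, mem_univ, if_true, sum_const,
    nsmul_eq_mul, ← ne_eq, hcard_ne, card_singleton, Nat.cast_one, one_mul,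
    Nat.cast_pred Fintype.card_pos]
  rw [mul_div_cancel₀ _ (sub_pos.2 hcard).ne', sub_add_cancel]

lemma prod_symmetricChannel_empirical [Nontrivial F] {ι : Type*} (S : Finset ι) (u v : ι → F) :
    ∏ i ∈ S, symmetricChannel (#{i ∈ S | u i ≠ v i} / #S : ℝ) (u i) (v i) =
      (Fintype.card F : ℝ) ^
        (-(#S * qEntropy (Fintype.card F) (#{i ∈ S | u i ≠ v i} / #S))) := by
  have hS : (#S : ℝ) = #{i ∈ S | u i = v i} + #{i ∈ S | u i ≠ v i} := by
    exact_mod_cast (card_filter_add_card_filter_not fun i => u i = v i).symm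
  simp only [symmetricChannel, prod_ite, prod_const, ← ne_eq]
  rw [hS]
  exact pow_mul_pow_eq_rpow_neg_mul_qEntropy Fintype.one_lt_card _ _

end SymmetricChannel

section PairBall

open Finset

variable {F : Type*} [DecidableEq F] {n : ℕ}

/-- The number of maximal cyclic runs of positions where `c` differs from `y`, each counted at the
position just before it starts; it is `0` if `c` differs from `y` everywhere. -/
def mismatchRuns (y c : Fin n → F) : ℕ :=
  #{i | y i = c i ∧ y (finRotate n i) ≠ c (finRotate n i)}

lemma finRotate_eq_mk_mod (i : Fin n) :
    finRotate n i = ⟨(i.1 + 1) % n, Nat.mod_lt _ i.pos⟩ := by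
  cases n with
  | zero => exact i.elim0
  | succ m => ext; simp [Fin.val_add]

lemma pairDist_eq_hammingDist_add_mismatchRuns (y c : Fin n → F) :
    pairDist y c = hammingDist y c + mismatchRuns y c := by
  simp only [pairDist, hammingDist, mismatchRuns, ← finRotate_eq_mk_mod, ne_eq, Prod.mk.injEq,
    not_and_or]
  rw [← card_union_of_disjoint]
  · congr 1
    ext i
    simp only [mem_filter_univ, mem_union]
    tauto
  · exact disjoint_filter.2 fun i _ hne hrun => hne hrun.1

lemma card_filter_mismatch_mismatch_add_mismatchRuns (y c : Fin n → F) :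
    #{i | y i ≠ c i ∧ y (finRotate n i) ≠ c (finRotate n i)} + mismatchRuns y c =
      hammingDist y c := by
  have hrotate : #{i | y (finRotate n i) ≠ c (finRotate n i)} = hammingDist y c :=
    card_bijective _ (finRotate n).bijective (by simp)
  rw [← hrotate, ← card_filter_add_card_filter_not
    (s := {i | y (finRotate n i) ≠ c (finRotate n i)}) fun i => y i ≠ c i, filter_filter,
    filter_filter, mismatchRuns]
  simp only [not_not, and_comm]

lemma mismatchRuns_le_hammingDist (y c : Fin n → F) : mismatchRuns y c ≤ hammingDist y c :=
  le_of_add_le_right (card_filter_mismatch_mismatch_add_mismatchRuns y c).le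

lemma mismatchRuns_add_hammingDist_le (y c : Fin n → F) :
    mismatchRuns y c + hammingDist y c ≤ n := by
  rw [add_comm, ← pairDist_eq_hammingDist_add_mismatchRuns]
  exact (card_filter_le _ _).trans_eq (card_fin n)

lemma card_filter_eq_add_hammingDist (y c : Fin n → F) :
    #{i | y i = c i} + hammingDist y c = n := by
  simpa only [card_fin] using!
    card_filter_add_card_filter_not (s := univ) fun i : Fin n => y i = c i

variable [Fintype F]

/-- The transition kernel of the Markov chain fitted to the type of `c₀`: at position `i` it passes
the next symbol of `y` through a symmetric channel, whose crossover probability is the empirical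
frequency in `c₀` of a mismatch after a match if `a` matches `y`, and after a mismatch otherwise.
A frequency over no positions is `0`, by division by zero. -/
noncomputable def typeKernel (y c₀ : Fin n → F) (i : Fin n) (a : F) : F → ℝ :=
  symmetricChannel
    (if y i = a then (mismatchRuns y c₀ : ℝ) / (n - hammingDist y c₀)
      else (hammingDist y c₀ - mismatchRuns y c₀) / hammingDist y c₀)
    (y (finRotate n i))

lemma typeKernel_nonneg [Nonempty F] (y c₀ : Fin n → F) (i : Fin n) (a c : F) :
    0 ≤ typeKernel y c₀ i a c := by
  have hle : (mismatchRuns y c₀ : ℝ) ≤ hammingDist y c₀ := by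
    exact_mod_cast mismatchRuns_le_hammingDist y c₀
  have hle_sub : (mismatchRuns y c₀ : ℝ) ≤ n - hammingDist y c₀ :=
    le_sub_iff_add_le.2 (by exact_mod_cast mismatchRuns_add_hammingDist_le y c₀)
  have hnonneg : (0 : ℝ) ≤ mismatchRuns y c₀ := Nat.cast_nonneg _
  refine symmetricChannel_nonneg ?_ _ _
  split_ifs
  · exact ⟨div_nonneg hnonneg (hnonneg.trans hle_sub),
      div_le_one_of_le₀ hle_sub (hnonneg.trans hle_sub)⟩
  · exact ⟨div_nonneg (sub_nonneg.2 hle) (Nat.cast_nonneg _),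
      div_le_one_of_le₀ (sub_le_self _ hnonneg) (Nat.cast_nonneg _)⟩

lemma prod_typeKernel_self [Nontrivial F] {y c : Fin n → F} {w b : ℕ} (hw : hammingDist y c = w)
    (hb : mismatchRuns y c = b) :
    ∏ i, typeKernel y c i (c i) (c (finRotate n i)) =
      (Fintype.card F : ℝ) ^ (-(w * qEntropy (Fintype.card F) ((w - b) / w) +
        (n - w) * qEntropy (Fintype.card F) (b / (n - w)))) := by
  have hmatch : (#{i | y i = c i} : ℝ) = n - w :=
    eq_sub_of_add_eq (by exact_mod_cast hw ▸ card_filter_eq_add_hammingDist y c)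
  have hmismatch : #{i | y i ≠ c i} = w := hw
  have hmatch_mismatch : #{i | y i = c i ∧ y (finRotate n i) ≠ c (finRotate n i)} = b := hb
  have hmismatch_mismatch :
      (#{i | y i ≠ c i ∧ y (finRotate n i) ≠ c (finRotate n i)} : ℝ) = w - b :=
    eq_sub_of_add_eq
      (by exact_mod_cast hw ▸ hb ▸ card_filter_mismatch_mismatch_add_mismatchRuns y c)
  have hprod_match := prod_symmetricChannel_empirical {i | y i = c i}
    (fun i => y (finRotate n i)) (fun i => c (finRotate n i))
  have hprod_mismatch := prod_symmetricChannel_empirical {i | y i ≠ c i}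
    (fun i => y (finRotate n i)) (fun i => c (finRotate n i))
  rw [filter_filter, hmatch, hmatch_mismatch] at hprod_match
  rw [filter_filter, hmismatch, hmismatch_mismatch] at hprod_mismatch
  rw [← prod_filter_mul_prod_filter_not univ fun i => y i = c i, neg_add, add_comm,
    Real.rpow_add (by exact_mod_cast Fintype.card_pos)]
  refine congrArg₂ (· * ·) (Eq.trans ?_ hprod_match) (Eq.trans ?_ hprod_mismatch)
  · exact prod_congr rfl fun i hi => by
      rw [typeKernel, if_pos (mem_filter.1 hi).2, hw, hb]
  · exact prod_congr rfl fun i hi => by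
      rw [typeKernel, if_neg (mem_filter.1 hi).2, hw, hb]

/-- The type class of `c₀` with respect to `y`: the words with as many mismatches with `y`, and as
many cyclic runs of mismatches, as `c₀`. -/
def typeClass (y c₀ : Fin n → F) : Finset (Fin n → F) :=
  {c | hammingDist y c = hammingDist y c₀ ∧ mismatchRuns y c = mismatchRuns y c₀}

lemma rpow_neg_kappaSP_le_prod_typeKernel [Nontrivial F] {τ : ℝ} (hτ : τ ≤ 1)
    {y c₀ c : Fin n → F} (hc₀ : (pairDist y c₀ : ℝ) ≤ τ * n) (hc : c ∈ typeClass y c₀) :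
    (Fintype.card F : ℝ) ^ (-(kappaSP (Fintype.card F) τ * n)) ≤
      ∏ i, typeKernel y c₀ i (c i) (c (finRotate n i)) := by
  obtain ⟨hw, hb⟩ := (mem_filter.1 hc).2
  have hkernel : typeKernel y c₀ = typeKernel y c := by
    unfold typeKernel
    rw [hw, hb]
  rw [pairDist_eq_hammingDist_add_mismatchRuns, ← hw, ← hb, Nat.cast_add] at hc₀
  rw [hkernel, prod_typeKernel_self rfl rfl]
  exact Real.rpow_le_rpow_of_exponent_le (by exact_mod_cast Fintype.card_pos) (neg_le_neg
    (mul_qEntropy_add_mul_qEntropy_le Fintype.one_lt_card hτ n.cast_nonneg (Nat.cast_nonneg _)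
      (by exact_mod_cast mismatchRuns_le_hammingDist y c) hc₀))

lemma card_typeClass_le [Nontrivial F] {τ : ℝ} (hτ : τ ≤ 1) {y c₀ : Fin n → F}
    (hc₀ : (pairDist y c₀ : ℝ) ≤ τ * n) :
    (#(typeClass y c₀) : ℝ) ≤
      Fintype.card F * (Fintype.card F : ℝ) ^ (kappaSP (Fintype.card F) τ * n) := by
  set q := Fintype.card F
  have hq : (0 : ℝ) < q := by exact_mod_cast Fintype.card_pos
  rw [← div_le_iff₀ (by positivity), div_eq_mul_inv, ← Real.rpow_neg hq.le]
  calc (#(typeClass y c₀) : ℝ) * (q : ℝ) ^ (-(kappaSP q τ * n))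
      = ∑ _c ∈ typeClass y c₀, (q : ℝ) ^ (-(kappaSP q τ * n)) := by
        rw [sum_const, nsmul_eq_mul]
    _ ≤ ∑ c ∈ typeClass y c₀, ∏ i, typeKernel y c₀ i (c i) (c (finRotate n i)) :=
        sum_le_sum fun c hc => rpow_neg_kappaSP_le_prod_typeKernel hτ hc₀ hc
    _ ≤ ∑ c : Fin n → F, ∏ i, typeKernel y c₀ i (c i) (c (finRotate n i)) :=
        sum_le_univ_sum_of_nonneg fun _ => prod_nonneg fun _ _ => typeKernel_nonneg _ _ _ _ _
    _ ≤ q := sum_prod_cycle_le_card (fun _ _ => sum_symmetricChannel _ _) (typeKernel_nonneg y c₀)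

/-- The closed ball of radius `r` around `y` for the symbol-pair distance. -/
noncomputable def pairBall (y : Fin n → F) (r : ℝ) : Finset (Fin n → F) :=
  {c | (pairDist y c : ℝ) ≤ r}

lemma card_pairBall_le [Nontrivial F] {τ : ℝ} (hτ : τ ≤ 1) (y : Fin n → F) :
    (#(pairBall y (τ * n)) : ℝ) ≤ ((n : ℝ) + 1) ^ 2 *
      (Fintype.card F * (Fintype.card F : ℝ) ^ (kappaSP (Fintype.card F) τ * n)) := by
  let type (c : Fin n → F) : ℕ × ℕ := (hammingDist y c, mismatchRuns y c)
  let types : Finset (ℕ × ℕ) := range (n + 1) ×ˢ range (n + 1)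
  have htype : ∀ c ∈ pairBall y (τ * n), type c ∈ types := fun c _ => by
    have hle := mismatchRuns_add_hammingDist_le y c
    simp only [type, types, mem_product, mem_range]
    omega
  have hfiber : ∀ t ∈ types, (#{c ∈ pairBall y (τ * n) | type c = t} : ℝ) ≤
      Fintype.card F * (Fintype.card F : ℝ) ^ (kappaSP (Fintype.card F) τ * n) := by
    intro t _
    rcases eq_empty_or_nonempty {c ∈ pairBall y (τ * n) | type c = t} with hempty | ⟨c₀, hc₀⟩
    · rw [hempty, card_empty, Nat.cast_zero]
      positivity
    · obtain ⟨hball, rfl⟩ := mem_filter.1 hc₀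
      refine le_trans ?_ (card_typeClass_le hτ (mem_filter.1 hball).2)
      refine Nat.cast_le.2 (card_le_card fun c hc => ?_)
      simpa [typeClass, type] using (mem_filter.1 hc).2
  rw [card_eq_sum_card_fiberwise htype, Nat.cast_sum]
  refine (sum_le_card_nsmul _ _ _ hfiber).trans_eq ?_
  simp only [types, card_product, card_range, nsmul_eq_mul]
  push_cast
  ring

end PairBall

section UnionBound

open Finset

variable {ι α : Type*} [Fintype ι] [DecidableEq ι] [Fintype α] [DecidableEq α] [Nonempty α]

lemma card_filter_forall_mem_eq (T : Finset ι) (S : Finset α) :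
    (#{f : ι → α | ∀ i ∈ T, f i ∈ S} : ℝ) =
      (#S / Fintype.card α : ℝ) ^ #T * (Fintype.card α : ℝ) ^ Fintype.card ι := by
  have hpi : ({f | ∀ i ∈ T, f i ∈ S} : Finset (ι → α)) =
      Fintype.piFinset fun i => if i ∈ T then S else univ := by
    ext f
    simp only [mem_filter_univ, Fintype.mem_piFinset]
    refine forall_congr' fun i => ?_
    split_ifs with hi <;> simp [hi]
  have hfactor (i : ι) : (#(if i ∈ T then S else univ) : ℝ) =
      (if i ∈ T then (#S / Fintype.card α : ℝ) else 1) * Fintype.card α := by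
    split_ifs
    · rw [div_mul_cancel₀ _ (Nat.cast_ne_zero.2 Fintype.card_ne_zero)]
    · rw [one_mul, card_univ]
  rw [hpi, Fintype.card_piFinset, Nat.cast_prod, prod_congr rfl fun i _ => hfactor i,
    prod_mul_distrib, prod_const, card_univ, prod_ite_mem, univ_inter, prod_const]

lemma card_filter_le_card_filter_mem_le (S : Finset α) (l : ℕ) :
    (#{f : ι → α | l ≤ #{i | f i ∈ S}} : ℝ) ≤
      (Fintype.card ι * #S / Fintype.card α : ℝ) ^ l *
        (Fintype.card α : ℝ) ^ Fintype.card ι := by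
  have hsub : ({f | l ≤ #{i | f i ∈ S}} : Finset (ι → α)) ⊆
      (powersetCard l univ).biUnion fun T : Finset ι => {f | ∀ i ∈ T, f i ∈ S} := by
    intro f hf
    obtain ⟨T, hT, hTcard⟩ := exists_subset_card_eq (mem_filter.1 hf).2
    exact mem_biUnion.2 ⟨T, mem_powersetCard.2 ⟨subset_univ T, hTcard⟩,
      mem_filter.2 ⟨mem_univ f, fun i hi => (mem_filter.1 (hT hi)).2⟩⟩
  calc (#{f : ι → α | l ≤ #{i | f i ∈ S}} : ℝ)
      ≤ ∑ T ∈ powersetCard l (univ : Finset ι), (#{f : ι → α | ∀ i ∈ T, f i ∈ S} : ℝ) := by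
        exact_mod_cast (card_le_card hsub).trans card_biUnion_le
    _ = (Fintype.card ι).choose l * ((#S / Fintype.card α : ℝ) ^ l *
          (Fintype.card α : ℝ) ^ Fintype.card ι) := by
        rw [sum_congr rfl fun T hT => by
          rw [card_filter_forall_mem_eq, (mem_powersetCard.1 hT).2], sum_const,
          card_powersetCard, card_univ, nsmul_eq_mul]
    _ ≤ (Fintype.card ι : ℝ) ^ l * ((#S / Fintype.card α : ℝ) ^ l *
          (Fintype.card α : ℝ) ^ Fintype.card ι) := by
        gcongr
        exact_mod_cast Nat.choose_le_pow _ l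
    _ = (Fintype.card ι * #S / Fintype.card α : ℝ) ^ l *
          (Fintype.card α : ℝ) ^ Fintype.card ι := by
        rw [← mul_assoc, ← mul_pow, mul_div_assoc]

end UnionBound

section ListDecoding

open Finset

variable {F : Type*} [Fintype F] [DecidableEq F] {n : ℕ} {ι : Type*} [Fintype ι]

lemma exists_lt_card_filter_mem_pairBall {f : ι → Fin n → F} {r : ℝ} {L : ℕ}
    (hf : ¬ pairListDecodable (image f univ) r L) : ∃ y, L < #{i | f i ∈ pairBall y r} := by
  obtain ⟨y, hy⟩ := not_forall.1 hf
  refine ⟨y, (not_le.1 hy).trans_le ?_⟩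
  simp only [filter_image, pairBall, mem_filter_univ]
  exact card_image_le

variable [DecidableEq ι]

lemma card_filter_not_pairListDecodable_le [Nonempty F] {r B : ℝ} (L : ℕ)
    (hB : ∀ y : Fin n → F, (#(pairBall y r) : ℝ) ≤ B) :
    (#{f : ι → Fin n → F | ¬ pairListDecodable (image f univ) r L} : ℝ) ≤
      (Fintype.card F : ℝ) ^ n * ((Fintype.card ι * B / (Fintype.card F : ℝ) ^ n) ^ (L + 1) *
        (Fintype.card F : ℝ) ^ (n * Fintype.card ι)) := by
  have hcard : (Fintype.card (Fin n → F) : ℝ) = (Fintype.card F : ℝ) ^ n := by simp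
  have hsub : ({f | ¬ pairListDecodable (image f univ) r L} : Finset (ι → Fin n → F)) ⊆
      univ.biUnion fun y => {f | L + 1 ≤ #{i | f i ∈ pairBall y r}} := by
    intro f hf
    obtain ⟨y, hy⟩ := exists_lt_card_filter_mem_pairBall (mem_filter.1 hf).2
    exact mem_biUnion.2 ⟨y, mem_univ y, mem_filter.2 ⟨mem_univ f, hy⟩⟩
  calc (#{f : ι → Fin n → F | ¬ pairListDecodable (image f univ) r L} : ℝ)
      ≤ ∑ y, (#{f : ι → Fin n → F | L + 1 ≤ #{i | f i ∈ pairBall y r}} : ℝ) := by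
        exact_mod_cast (card_le_card hsub).trans card_biUnion_le
    _ ≤ ∑ _y : Fin n → F, (Fintype.card ι * B / (Fintype.card F : ℝ) ^ n) ^ (L + 1) *
          (Fintype.card F : ℝ) ^ (n * Fintype.card ι) := by
        refine sum_le_sum fun y _ => (card_filter_le_card_filter_mem_le _ _).trans ?_
        rw [hcard, pow_mul]
        gcongr
        exact hB y
    _ = _ := by rw [sum_const, card_univ, nsmul_eq_mul, hcard]

lemma one_sub_mul_le_card_filter_pairListDecodable {δ r : ℝ} {L : ℕ}
    (hδ : (#{f : ι → Fin n → F | ¬ pairListDecodable (image f univ) r L} : ℝ) ≤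
      δ * (Fintype.card F : ℝ) ^ (n * Fintype.card ι)) :
    (1 - δ) * (Fintype.card F : ℝ) ^ (n * Fintype.card ι) ≤
      #{f : ι → Fin n → F | pairListDecodable (image f univ) r L} := by
  have htotal : (#{f : ι → Fin n → F | pairListDecodable (image f univ) r L} : ℝ) +
      #{f : ι → Fin n → F | ¬ pairListDecodable (image f univ) r L} =
        (Fintype.card F : ℝ) ^ (n * Fintype.card ι) := by
    rw [← Nat.cast_add, card_filter_add_card_filter_not, card_univ]
    simp [pow_mul]
  linarith

end ListDecoding

section Asymptotics

open Filter

lemma eventually_const_mul_succ_pow_le_pow (C : ℝ) {c : ℝ} (hc : 1 < c) (k : ℕ) :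
    ∀ᶠ n : ℕ in atTop, C * ((n : ℝ) + 1) ^ k ≤ c ^ n := by
  have hlittleO := ((isLittleO_pow_const_const_pow_of_one_lt (R := ℝ) k hc).comp_tendsto
    (tendsto_add_atTop_nat 1)).const_mul_left C
  filter_upwards [hlittleO.def (inv_pos.2 (zero_lt_one.trans hc))] with n hn
  have hc0 : 0 < c := zero_lt_one.trans hc
  have hnorm : c⁻¹ * ‖c ^ (n + 1)‖ = c ^ n := by
    rw [Real.norm_of_nonneg (by positivity), pow_succ', inv_mul_cancel_left₀ hc0.ne']
  simp only [Function.comp_apply, hnorm, Nat.cast_add, Nat.cast_one] at hn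
  exact (Real.le_norm_self _).trans hn

variable {q : ℝ} {n : ℕ}

lemma natCeil_rpow_le_two_mul (hq : 1 ≤ q) {x : ℝ} (hx : 0 ≤ x) :
    (⌈q ^ x⌉₊ : ℝ) ≤ 2 * q ^ x := by
  have hone : 1 ≤ q ^ x := Real.one_le_rpow hq hx
  linarith [Nat.ceil_lt_add_one (zero_le_one.trans hone)]

lemma mul_div_pow_le_rpow_neg (hq : 0 < q) {R κ ε m A : ℝ} (hA : 0 ≤ A)
    (hrate : R + κ + ε = 1) (hm : m ≤ 2 * q ^ (R * n)) (hgrowth : 2 * A ≤ q ^ (ε / 2 * n)) :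
    m * (A * q ^ (κ * n)) / q ^ n ≤ q ^ (-(ε / 2 * n)) := by
  rw [div_le_iff₀ (by positivity)]
  calc m * (A * q ^ (κ * n))
      ≤ 2 * q ^ (R * n) * (A * q ^ (κ * n)) := by gcongr
    _ = 2 * A * (q ^ (R * n) * q ^ (κ * n)) := by ring
    _ ≤ q ^ (ε / 2 * n) * (q ^ (R * n) * q ^ (κ * n)) := by gcongr
    _ = q ^ (-(ε / 2 * n)) * q ^ n := by
      rw [← Real.rpow_natCast q n, ← Real.rpow_add hq, ← Real.rpow_add hq, ← Real.rpow_add hq]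
      congr 1
      linear_combination n * hrate

lemma pow_le_inv_pow_sq (hq : 1 ≤ q) {ε x : ℝ} {l : ℕ} (hl : 4 ≤ l * ε) (hx0 : 0 ≤ x)
    (hx : x ≤ q ^ (-(ε / 2 * n))) : x ^ l ≤ ((q ^ n)⁻¹) ^ 2 := by
  have hq0 : 0 ≤ q := zero_le_one.trans hq
  calc x ^ l ≤ (q ^ (-(ε / 2 * n))) ^ l := by gcongr
    _ = q ^ (-(ε / 2 * n) * l) := by rw [Real.rpow_mul hq0, Real.rpow_natCast]
    _ ≤ q ^ (-((n : ℝ) * (2 : ℕ))) := by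
      refine Real.rpow_le_rpow_of_exponent_le hq ?_
      push_cast
      nlinarith [n.cast_nonneg (α := ℝ)]
    _ = ((q ^ n)⁻¹) ^ 2 := by
      rw [Real.rpow_neg hq0, Real.rpow_mul hq0, Real.rpow_natCast, Real.rpow_natCast, inv_pow]

end Asymptotics

lemma card_filter_not_pairListDecodable_le_inv_mul {F : Type*} [Fintype F] [Nontrivial F]
    [DecidableEq F] {n M L : ℕ} {τ ε R : ℝ} (hτ : τ ≤ 1)
    (hR : R + kappaSP (Fintype.card F) τ + ε = 1)
    (hM : (M : ℝ) ≤ 2 * (Fintype.card F : ℝ) ^ (R * n)) (hL : 4 ≤ ((L + 1 : ℕ) : ℝ) * ε)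
    (hgrowth : 2 * Fintype.card F * ((n : ℝ) + 1) ^ 2 ≤ (Fintype.card F : ℝ) ^ (ε / 2 * n)) :
    (Finset.card {f : Fin M → Fin n → F |
        ¬ pairListDecodable (Finset.image f Finset.univ) (τ * n) L} : ℝ) ≤
      ((Fintype.card F : ℝ) ^ n)⁻¹ * (Fintype.card F : ℝ) ^ (n * M) := by
  have hcard : (0 : ℝ) < Fintype.card F := by exact_mod_cast Fintype.card_pos
  have hfail := card_filter_not_pairListDecodable_le (ι := Fin M) L
    fun y : Fin n → F => card_pairBall_le hτ y
  rw [Fintype.card_fin, ← mul_assoc (_ ^ 2), ← mul_assoc (_ ^ n)] at hfail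
  have hhit := mul_div_pow_le_rpow_neg (A := ((n : ℝ) + 1) ^ 2 * Fintype.card F) hcard
    (by positivity) hR hM (by linarith)
  have hhits := pow_le_inv_pow_sq (by exact_mod_cast Fintype.card_pos) hL (by positivity) hhit
  refine hfail.trans ?_
  gcongr
  refine (mul_le_mul_of_nonneg_left hhits (by positivity)).trans_eq ?_
  field_simp

theorem random_pair_codes_achieve_gv_general {F : Type*} [Fintype F] [Nontrivial F]
    [DecidableEq F] {q : ℕ} (hq : Fintype.card F = q) (τ ε R : ℝ) (hτ : τ ∈ Set.Icc 0 1)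
    (hε : 0 < ε) (hR : R = 1 - kappaSP q τ - ε) (hRpos : 0 < R) :
    ∃ n₀ : ℕ, ∀ n : ℕ, n₀ ≤ n →
      ∀ M L : ℕ, M = ⌈(q : ℝ) ^ (R * (n : ℝ))⌉₊ → L = ⌈(4 : ℝ) / ε⌉₊ - 1 →
      (1 - ((q : ℝ) ^ n)⁻¹) * (q : ℝ) ^ (n * M) ≤
        ((Finset.univ.filter fun f : Fin M → (Fin n → F) =>
            pairListDecodable (Finset.image f Finset.univ) (τ * n) L).card : ℝ) := by
  subst hq
  have hcard : (1 : ℝ) < Fintype.card F := by exact_mod_cast Fintype.one_lt_card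
  obtain ⟨n₀, hgrowth⟩ := Filter.eventually_atTop.1 (eventually_const_mul_succ_pow_le_pow
    (2 * Fintype.card F) (Real.one_lt_rpow hcard (half_pos hε)) 2)
  refine ⟨n₀, fun n hn M L hM hL => ?_⟩
  have hM_le : (M : ℝ) ≤ 2 * (Fintype.card F : ℝ) ^ (R * n) :=
    hM ▸ natCeil_rpow_le_two_mul hcard.le (by positivity)
  have hL_ge : 4 ≤ ((L + 1 : ℕ) : ℝ) * ε := by
    rw [hL, Nat.sub_add_cancel (Nat.ceil_pos.2 (by positivity)), ← div_le_iff₀ hε]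
    exact Nat.le_ceil _
  have hgrowth_n :
      2 * Fintype.card F * ((n : ℝ) + 1) ^ 2 ≤ (Fintype.card F : ℝ) ^ (ε / 2 * n) := by
    rw [Real.rpow_mul (by positivity), Real.rpow_natCast]
    exact hgrowth n hn
  have hfail := card_filter_not_pairListDecodable_le_inv_mul (F := F) hτ.2 (by linarith) hM_le
    hL_ge hgrowth_n
  simpa only [Fintype.card_fin] using
    one_sub_mul_le_card_filter_pairListDecodable (ι := Fin M) (by rwa [Fintype.card_fin])

/-- (Random symbol-pair codes achieve the Gilbert–Varshamov bound) Let `q` be the size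
of the finite field `F`, `τ ∈ (0,1)`, `ε ∈ (0,1)` with `R := 1 − κ_sp(τ) − ε > 0`, and
`L = ⌈4/ε⌉ − 1`. For all sufficiently large `n`: among all `M = ⌈q^{Rn}⌉`-tuples of
codewords (i.e. codewords chosen independently and uniformly at random from `F_q^n`),
the fraction of tuples whose code `C = {c_1,…,c_M}` is `(τn, L)_P`-list decodable is
at least `1 − q^{−n}`; equivalently, at least `(1 − q^{−n})·q^{nM}` of all `q^{nM}`
tuples yield a `(τn, L)_P`-list decodable code. -/
theorem random_pair_codes_achieve_gv {F : Type*} [Field F] [Fintype F] [DecidableEq F]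
    {q : ℕ} (hq : Fintype.card F = q) (τ ε R : ℝ)
    (hτ0 : 0 < τ) (hτ1 : τ < 1) (hε0 : 0 < ε) (hε1 : ε < 1)
    (hR : R = 1 - kappaSP q τ - ε) (hRpos : 0 < R) :
    ∃ n₀ : ℕ, ∀ n : ℕ, n₀ ≤ n →
      ∀ M L : ℕ, M = ⌈(q : ℝ) ^ (R * (n : ℝ))⌉₊ → L = ⌈(4 : ℝ) / ε⌉₊ - 1 →
      (1 - ((q : ℝ) ^ n)⁻¹) * (q : ℝ) ^ (n * M) ≤
        ((Finset.univ.filter fun f : Fin M → (Fin n → F) =>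
            pairListDecodable (Finset.image f Finset.univ) (τ * n) L).card : ℝ) := by
  exact random_pair_codes_achieve_gv_general hq τ ε R ⟨hτ0.le, hτ1.le⟩ hε0 hR hRpos
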